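/- arXiv:2401.06451 — 4 statements merged into one kernel-verified Lean document; each statement's English description precedes it below -/
import Mathlib

section
/- In any Kripke model of the class KH, each hope relation H_i is a partial equivalence relation, i.e., H_i is symmetric and transitive. -/
/-- A Kripke model (raw data): a valuation on atomic propositions (coded by `ℕ`),
and for each of the `n` agents a knowledge relation `K i` and a hope relation `H i`
on the set of worlds `W`. -/
structure Model (n : ℕ) (W : Type) where
  val : ℕ → W → Prop
  K : Fin n → W → W → Prop
  H : Fin n → W → W → Prop

/-- Membership in the class KH: each `K i` is an equivalence relation, each `H i` is
shift-serial, `H i ⊆ K i` (HinK), and oneH. -/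
def Model.KH {n : ℕ} {W : Type} (M : Model n W) : Prop :=
  (∀ i, Equivalence (M.K i)) ∧
  (∀ i w v, M.H i w v → ∃ z, M.H i v z) ∧
  (∀ i w v, M.H i w v → M.K i w v) ∧
  (∀ i w v, (∃ x, M.H i w x) → (∃ x, M.H i v x) → M.K i w v → M.H i w v)

/-- The relation `H` is the restriction of `K` to the points satisfying `D`, encoded as a relation
on the whole type, so that points outside `D` are related to nothing, not even to themselves. In a
model of KH, each `H i` is such a restriction of `K i`, with `D` the domain of `H i`. -/
def IsRestriction {α : Sort*} (H K : α → α → Prop) (D : α → Prop) : Prop :=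
  ∀ w v, H w v ↔ K w v ∧ D w ∧ D v

section Restriction

variable {α : Sort*} {H K : α → α → Prop}

theorem IsRestriction.stdSymm {D : α → Prop} [Std.Symm K] (h : IsRestriction H K D) :
    Std.Symm H where
  symm w v hwv :=
    let ⟨kwv, dw, dv⟩ := (h w v).mp hwv
    (h v w).mpr ⟨symm kwv, dv, dw⟩

theorem IsRestriction.isTrans {D : α → Prop} [IsTrans α K] (h : IsRestriction H K D) :
    IsTrans α H where
  trans w v z hwv hvz :=
    let ⟨kwv, dw, _⟩ := (h w v).mp hwv
    let ⟨kvz, _, dz⟩ := (h v z).mp hvz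
    (h w z).mpr ⟨trans_of K kwv kvz, dw, dz⟩

theorem isRestriction_dom (shiftSerial : ∀ w v, H w v → ∃ z, H v z)
    (hinK : ∀ w v, H w v → K w v)
    (oneH : ∀ w v, (∃ x, H w x) → (∃ x, H v x) → K w v → H w v) :
    IsRestriction H K (fun w => ∃ x, H w x) := fun w v =>
  ⟨fun hwv => ⟨hinK w v hwv, ⟨v, hwv⟩, shiftSerial w v hwv⟩,
    fun ⟨kwv, hw, hv⟩ => oneH w v hw hv kwv⟩

theorem hope_symm_trans_general [Std.Symm K] [IsTrans α K]
    (shiftSerial : ∀ w v, H w v → ∃ z, H v z)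
    (hinK : ∀ w v, H w v → K w v)
    (oneH : ∀ w v, (∃ x, H w x) → (∃ x, H v x) → K w v → H w v) :
    Std.Symm H ∧ IsTrans α H :=
  have restr := isRestriction_dom shiftSerial hinK oneH
  ⟨restr.stdSymm, restr.isTrans⟩

end Restriction

/-- In any Kripke model of the class KH, each hope relation `H i` is a
partial equivalence relation, i.e., it is symmetric and transitive. -/
theorem hope_symm_trans {n : ℕ} (hn : 0 < n) {W : Type} [Nonempty W]
    (M : Model n W) (hM : M.KH) (i : Fin n) :
    Symmetric (M.H i) ∧ Transitive (M.H i) := by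
  obtain ⟨equivK, shiftSerial, hinK, oneH⟩ := hM
  have : Std.Symm (M.K i) := (equivK i).stdSymm
  have : IsTrans W (M.K i) := (equivK i).isTrans
  obtain ⟨symmH, transH⟩ := hope_symm_trans_general (shiftSerial i) (hinK i) (oneH i)
  exact ⟨symmH.symm, transH.trans⟩
end

section
/- If M = (W,π,K,H) is a Kripke model in the class KH and φ⃗ = (φ_1,...,φ_n) is a tuple of formulas of the language L_KH^pub, then the publicly updated model M^{φ⃗} = (W,π,K,H^{φ⃗}) is again in the class KH; that is, each updated hope relation H_i^{φ_i} is shift-serial, is contained in K_i (HinK), and satisfies oneH. -/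
/-- Formulas of the language `L_KH^pub`: atoms, negation, conjunction, knowledge `K i`,
hope `H i`, and public hope update `[φ_1,…,φ_n]ψ` (the tuple given as `Fin n → Form n`). -/
inductive Form (n : ℕ) : Type where
  | atom : ℕ → Form n
  | neg : Form n → Form n
  | and : Form n → Form n → Form n
  | know : Fin n → Form n → Form n
  | hope : Fin n → Form n → Form n
  | upd : (Fin n → Form n) → Form n → Form n

/-- Replace the hope relations: `w H_i^χ v` iff `w K_i v`, `c i` holds at `w`, and at `v`. -/
def Model.hopeUpd {n : ℕ} {W : Type} (M : Model n W) (c : Fin n → W → Prop) : Model n W where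
  val := M.val
  K := M.K
  H := fun i w v => M.K i w v ∧ c i w ∧ c i v

/-- Truth at a world. -/
def sat {n : ℕ} {W : Type} : Model n W → W → Form n → Prop
  | M, w, .atom p => M.val p w
  | M, w, .neg φ => ¬ sat M w φ
  | M, w, .and φ ψ => sat M w φ ∧ sat M w ψ
  | M, w, .know i φ => ∀ v, M.K i w v → sat M v φ
  | M, w, .hope i φ => ∀ v, M.H i w v → sat M v φ
  | M, w, .upd φs ψ => sat (M.hopeUpd (fun i v => sat M v (φs i))) w ψ

/-- The publicly updated model `M^{φ⃗}`. -/
def Model.pubUpdate {n : ℕ} {W : Type} (M : Model n W) (φs : Fin n → Form n) : Model n W :=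
  M.hopeUpd (fun i v => sat M v (φs i))

def ftop {n : ℕ} : Form n := .neg (.and (.atom 0) (.neg (.atom 0)))
def fbot {n : ℕ} : Form n := .neg ftop
def fimpl {n : ℕ} (φ ψ : Form n) : Form n := .neg (.and φ (.neg ψ))
def forr {n : ℕ} (φ ψ : Form n) : Form n := .neg (.and (.neg φ) (.neg ψ))
def fiff {n : ℕ} (φ ψ : Form n) : Form n := .and (fimpl φ ψ) (fimpl ψ φ)
/-- `¬H_i⊥`: agent `i` is correct. -/
def fcorrect {n : ℕ} (i : Fin n) : Form n := .neg (.hope i fbot)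

/-- Validity on the class KH: true at every world of every (nonempty) model in KH. -/
def Valid {n : ℕ} (φ : Form n) : Prop :=
  ∀ (W : Type) (M : Model n W), Nonempty W → M.KH → ∀ w : W, sat M w φ

namespace Model

variable {n : ℕ} {W : Type} {M : Model n W} {c : Fin n → W → Prop} {i : Fin n} {w v : W}

theorem hopeUpd_shiftSerial (hrefl : ∀ u, M.K i u u) (h : (M.hopeUpd c).H i w v) :
    ∃ z, (M.hopeUpd c).H i v z :=
  have ⟨_, _, hv⟩ := h
  ⟨v, hrefl v, hv, hv⟩

theorem K_of_hopeUpd_H (h : (M.hopeUpd c).H i w v) : M.K i w v :=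
  h.1

theorem of_exists_hopeUpd_H (h : ∃ x, (M.hopeUpd c).H i w x) : c i w :=
  have ⟨_, _, hw, _⟩ := h
  hw

theorem hopeUpd_oneH (hw : ∃ x, (M.hopeUpd c).H i w x) (hv : ∃ x, (M.hopeUpd c).H i v x)
    (h : M.K i w v) : (M.hopeUpd c).H i w v :=
  ⟨h, of_exists_hopeUpd_H hw, of_exists_hopeUpd_H hv⟩

end Model

theorem pubUpdate_KH_general {n : ℕ} {W : Type} {M : Model n W}
    (hK : ∀ i, Equivalence (M.K i)) (c : Fin n → W → Prop) :
    (M.hopeUpd c).KH :=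
  ⟨hK, fun i _ _ => Model.hopeUpd_shiftSerial (hK i).refl, fun _ _ _ => Model.K_of_hopeUpd_H,
    fun _ _ _ => Model.hopeUpd_oneH⟩

/-- if `M ∈ KH` and `φ⃗` is a tuple of `L_KH^pub`-formulas, then the publicly
updated model `M^{φ⃗}` is again in KH (each updated hope relation is shift-serial,
contained in `K i`, and satisfies oneH; the knowledge relations are unchanged). -/
theorem pubUpdate_KH {n : ℕ} (hn : 0 < n) {W : Type} [Nonempty W]
    (M : Model n W) (hM : M.KH) (φs : Fin n → Form n) :
    (M.pubUpdate φs).KH :=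
  pubUpdate_KH_general hM.1 _
end

section
/- Soundness of KH^pub: for every formula φ ∈ L_KH^pub, if φ is derivable in the axiom system KH^pub, then φ is valid on the class KH (true at every world of every model in KH). -/
/-- `φ` is a propositional tautology: it is true under every assignment of truth values
to formulas that respects negation and conjunction (atoms, `K`, `H`, and update
formulas are treated as opaque). -/
def Tautology {n : ℕ} (φ : Form n) : Prop :=
  ∀ v : Form n → Prop,
    (∀ ψ, v (.neg ψ) ↔ ¬ v ψ) → (∀ ψ χ, v (.and ψ χ) ↔ (v ψ ∧ v χ)) → v φ

/-- The axiom system `KH^pub`: the system `KH` (propositional tautologies, `H†`, `K^K`,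
`4^K`, `5^K`, `T^K`, the `KH` axiom, modus ponens, necessitation for `K_i`) extended
with the reduction axioms for public hope updates. -/
inductive DerivPub {n : ℕ} : Form n → Prop where
  | taut {φ} : Tautology φ → DerivPub φ
  | hdag (i : Fin n) : DerivPub (.hope i (.neg (.hope i fbot)))
  | kK (i : Fin n) (φ ψ : Form n) :
      DerivPub (fimpl (.and (.know i (fimpl φ ψ)) (.know i φ)) (.know i ψ))
  | fourK (i : Fin n) (φ : Form n) : DerivPub (fimpl (.know i φ) (.know i (.know i φ)))
  | fiveK (i : Fin n) (φ : Form n) :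
      DerivPub (fimpl (.neg (.know i φ)) (.know i (.neg (.know i φ))))
  | tK (i : Fin n) (φ : Form n) : DerivPub (fimpl (.know i φ) φ)
  | kh (i : Fin n) (φ : Form n) :
      DerivPub (fiff (.hope i φ) (fimpl (fcorrect i) (.know i (fimpl (fcorrect i) φ))))
  | mp {φ ψ : Form n} : DerivPub (fimpl φ ψ) → DerivPub φ → DerivPub ψ
  | necK {φ : Form n} (i : Fin n) : DerivPub φ → DerivPub (.know i φ)
  | redAtom (φs : Fin n → Form n) (p : ℕ) : DerivPub (fiff (.upd φs (.atom p)) (.atom p))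
  | redNeg (φs : Fin n → Form n) (ψ : Form n) :
      DerivPub (fiff (.upd φs (.neg ψ)) (.neg (.upd φs ψ)))
  | redAnd (φs : Fin n → Form n) (ψ ξ : Form n) :
      DerivPub (fiff (.upd φs (.and ψ ξ)) (.and (.upd φs ψ) (.upd φs ξ)))
  | redKnow (φs : Fin n → Form n) (i : Fin n) (ψ : Form n) :
      DerivPub (fiff (.upd φs (.know i ψ)) (.know i (.upd φs ψ)))
  | redHope (φs : Fin n → Form n) (i : Fin n) (ψ : Form n) :
      DerivPub (fiff (.upd φs (.hope i ψ))
        (fimpl (φs i) (.know i (fimpl (φs i) (.upd φs ψ)))))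
  | redUpd (φs χs : Fin n → Form n) (ψ : Form n) :
      DerivPub (fiff (.upd φs (.upd χs ψ)) (.upd (fun i => .upd φs (χs i)) ψ))

/-!
A model in KH is recovered from its knowledge relations and the sets of correct worlds: updating its
hope relations with correctness gives back the same model. Hence the axiom KH and the reduction
axiom for hope after an update are one fact about updated models, applied to correctness in the
first case and to the announced formulas in the second. Two successive updates compose because an
update discards the old hope relations and never touches knowledge.
-/

namespace Model

variable {n : ℕ} {W : Type} {M : Model n W}

/-- Agent `i` is correct at `w`: the semantic counterpart of `fcorrect i`, i.e. of `¬H_i⊥`. -/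
def Correct (M : Model n W) (i : Fin n) (w : W) : Prop :=
  ∃ v, M.H i w v

theorem hopeUpd_hopeUpd (M : Model n W) (c d : Fin n → W → Prop) :
    (M.hopeUpd c).hopeUpd d = M.hopeUpd d :=
  rfl

theorem KH.hopeUpd_correct (hM : M.KH) : M.hopeUpd M.Correct = M := by
  obtain ⟨-, shiftSerial, hope_subset_know, oneH⟩ := hM
  refine congrArg (Model.mk M.val M.K) (funext₃ fun i w v => propext ⟨?_, ?_⟩)
  · rintro ⟨hwv, hw, hv⟩
    exact oneH i w v hw hv hwv
  · exact fun hwv => ⟨hope_subset_know i w v hwv, ⟨v, hwv⟩, shiftSerial i w v hwv⟩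

end Model

section Truth

variable {n : ℕ} {W : Type} {M : Model n W} {w : W} {i : Fin n} {φ ψ : Form n}

theorem sat_fimpl : sat M w (fimpl φ ψ) ↔ (sat M w φ → sat M w ψ) := by
  simp only [fimpl, sat, not_and, not_not]

theorem sat_fiff : sat M w (fiff φ ψ) ↔ (sat M w φ ↔ sat M w ψ) := by
  simp only [fiff, sat, sat_fimpl, iff_iff_implies_and_implies]

theorem not_sat_fbot : ¬ sat M w fbot := by
  simp only [fbot, ftop, sat, and_not_self, not_false_eq_true, not_true_eq_false]

theorem sat_fcorrect : sat M w (fcorrect i) ↔ M.Correct i w := by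
  simp only [fcorrect, sat, not_sat_fbot, imp_false, not_forall, not_not, Model.Correct]

theorem sat_of_tautology (hφ : Tautology φ) : sat M w φ :=
  hφ (sat M w) (fun _ => Iff.rfl) (fun _ _ => Iff.rfl)

theorem sat_know_mp (himp : sat M w (.know i (fimpl φ ψ))) (hφ : sat M w (.know i φ)) :
    sat M w (.know i ψ) :=
  fun v hwv => sat_fimpl.1 (himp v hwv) (hφ v hwv)

theorem sat_of_sat_know (hrefl : M.K i w w) (hφ : sat M w (.know i φ)) : sat M w φ :=
  hφ w hrefl

theorem sat_know_know (htrans : ∀ {u v}, M.K i w u → M.K i u v → M.K i w v)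
    (hφ : sat M w (.know i φ)) : sat M w (.know i (.know i φ)) :=
  fun _ hwu v huv => hφ v (htrans hwu huv)

theorem sat_know_neg_know (heucl : ∀ {u v}, M.K i w u → M.K i w v → M.K i u v)
    (hφ : sat M w (.neg (.know i φ))) : sat M w (.know i (.neg (.know i φ))) :=
  fun _ hwu hu => hφ fun v hwv => hu v (heucl hwu hwv)

theorem sat_hope_fcorrect (hserial : ∀ v, M.H i w v → M.Correct i v) :
    sat M w (.hope i (fcorrect i)) :=
  fun v hwv => sat_fcorrect.2 (hserial v hwv)

theorem sat_hopeUpd_hope {c : Fin n → W → Prop} :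
    sat (M.hopeUpd c) w (.hope i φ) ↔
      (c i w → ∀ v, M.K i w v → c i v → sat (M.hopeUpd c) v φ) :=
  ⟨fun h hw v hwv hv => h v ⟨hwv, hw, hv⟩, fun h v ⟨hwv, hw, hv⟩ => h hw v hwv hv⟩

theorem Model.KH.sat_hope (hM : M.KH) :
    sat M w (.hope i φ) ↔ sat M w (fimpl (fcorrect i) (.know i (fimpl (fcorrect i) φ))) := by
  have hope_iff := sat_hopeUpd_hope (M := M) (w := w) (i := i) (φ := φ) (c := M.Correct)
  rw [hM.hopeUpd_correct] at hope_iff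
  simpa only [sat_fimpl, sat_fcorrect, sat] using hope_iff

variable {φs χs : Fin n → Form n} {ξ : Form n}

theorem sat_upd_atom {p : ℕ} : sat M w (.upd φs (.atom p)) ↔ sat M w (.atom p) :=
  Iff.rfl

theorem sat_upd_neg : sat M w (.upd φs (.neg ψ)) ↔ sat M w (.neg (.upd φs ψ)) :=
  Iff.rfl

theorem sat_upd_and :
    sat M w (.upd φs (.and ψ ξ)) ↔ sat M w (.and (.upd φs ψ) (.upd φs ξ)) :=
  Iff.rfl

theorem sat_upd_know : sat M w (.upd φs (.know i ψ)) ↔ sat M w (.know i (.upd φs ψ)) :=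
  Iff.rfl

theorem sat_upd_hope :
    sat M w (.upd φs (.hope i ψ)) ↔
      sat M w (fimpl (φs i) (.know i (fimpl (φs i) (.upd φs ψ)))) := by
  simpa only [sat_fimpl, sat] using sat_hopeUpd_hope (c := fun i v => sat M v (φs i))

theorem sat_upd_upd :
    sat M w (.upd φs (.upd χs ψ)) ↔ sat M w (.upd (fun i => .upd φs (χs i)) ψ) := by
  simp only [sat, Model.hopeUpd_hopeUpd]

end Truth

/-- soundness of `KH^pub`: every formula derivable in `KH^pub` is valid
on the class KH. -/
theorem khpub_sound {n : ℕ} (hn : 0 < n) (φ : Form n) (h : DerivPub φ) : Valid φ := by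
  intro W M _ hM
  have hK : ∀ i, Equivalence (M.K i) := hM.1
  have shiftSerial : ∀ i w v, M.H i w v → M.Correct i v := hM.2.1
  induction h with
  | taut hφ => exact fun _ => sat_of_tautology hφ
  | hdag i => exact fun w => sat_hope_fcorrect (shiftSerial i w)
  | kK => exact fun _ => sat_fimpl.2 fun h => sat_know_mp h.1 h.2
  | fourK i => exact fun _ => sat_fimpl.2 (sat_know_know (hK i).trans)
  | fiveK i =>
    exact fun _ => sat_fimpl.2 <|
      sat_know_neg_know fun hwu hwv => (hK i).trans ((hK i).symm hwu) hwv
  | tK i => exact fun w => sat_fimpl.2 (sat_of_sat_know ((hK i).refl w))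
  | kh => exact fun _ => sat_fiff.2 hM.sat_hope
  | mp _ _ himp hφ => exact fun w => sat_fimpl.1 (himp w) (hφ w)
  | necK _ _ hφ => exact fun _ v _ => hφ v
  | redAtom => exact fun _ => sat_fiff.2 sat_upd_atom
  | redNeg => exact fun _ => sat_fiff.2 sat_upd_neg
  | redAnd => exact fun _ => sat_fiff.2 sat_upd_and
  | redKnow => exact fun _ => sat_fiff.2 sat_upd_know
  | redHope => exact fun _ => sat_fiff.2 sat_upd_hope
  | redUpd => exact fun _ => sat_fiff.2 sat_upd_upd
end

section
/- For each reduction axiom θ_l ↔ θ_r of the system KH^pub (namely [φ⃗]p ↔ p; [φ⃗]¬ψ ↔ ¬[φ⃗]ψ; [φ⃗](ψ∧ξ) ↔ [φ⃗]ψ ∧ [φ⃗]ξ; [φ⃗]K_iψ ↔ K_i[φ⃗]ψ; [φ⃗]H_iψ ↔ (φ_i → K_i(φ_i → [φ⃗]ψ)), with the right-hand side written using only ¬ and ∧ as ¬(φ_i ∧ ¬K_i¬(φ_i ∧ ¬[φ⃗]ψ)); and [φ⃗][χ⃗]ψ ↔ [[φ⃗]χ_1,...,[φ⃗]χ_n]ψ),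 the complexity of the left-hand side is strictly greater than the complexity of the right-hand side: c(θ_l) > c(θ_r). -/
/-- The complexity `c` of `L_KH^pub`-formulas: `c(p)=1`, `c(¬φ)=c(φ)+1`,
`c(φ∧ξ)=max(c(φ),c(ξ))+1`, `c(K_iφ)=c(φ)+1`, `c(H_iφ)=c(φ)+4`, and
`c([φ⃗]ξ)=(c(φ⃗)+1)·c(ξ)` where `c(φ⃗)=max_i c(φ_i)`. -/
def c {n : ℕ} : Form n → ℕ
  | .atom _ => 1
  | .neg φ => c φ + 1
  | .and φ ξ => max (c φ) (c ξ) + 1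
  | .know _ φ => c φ + 1
  | .hope _ φ => c φ + 4
  | .upd φs ξ => ((Finset.univ.sup fun i => c (φs i)) + 1) * c ξ

/-!
Write `m = c(φ⃗) + 1`, the factor by which an update multiplies complexity. Formulas have positive
complexity, so `m ≥ 2` once there is an agent. Pushing the update through a connective of cost `k`
turns `m * (x + k)` into `m * x + k`, which is smaller because the cost is no longer multiplied.
For hope, `x = c(ψ)` and `k = 4`, while the right-hand side of the axiom costs `m * x + 7`: the two
implications and the `K_i` add up to `7 < 8 ≤ m * 4`. For nested updates, the tuple `[φ⃗]χ⃗` has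
complexity `m * c(χ⃗)`, so that the factor `m * (c(χ⃗) + 1)` becomes `m * c(χ⃗) + 1`.
-/

theorem mul_add_lt_mul_add_of_one_lt {R : Type*} [Semiring R] [PartialOrder R]
    [IsStrictOrderedRing R] {m k : R} (hm : 1 < m) (hk : 0 < k) (x : R) :
    m * x + k < m * (x + k) := by
  rw [mul_add]
  gcongr
  exact lt_mul_of_one_lt_left hk hm

namespace Form

variable {n : ℕ}

theorem c_pos (φ : Form n) : 0 < c φ := by
  induction φ with
  | upd φs ξ _ ihξ => exact Nat.mul_pos (Nat.succ_pos _) ihξ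
  | atom | neg | and | know | hope => exact Nat.succ_pos _

/-- The complexity `c(φ⃗) = max_i c(φ_i)` of a tuple of formulas. It is encoded as a supremum in
`ℕ`, so the empty tuple has complexity `0`. -/
def tupleComplexity (φs : Fin n → Form n) : ℕ :=
  Finset.univ.sup fun i => c (φs i)

theorem c_le_tupleComplexity (φs : Fin n → Form n) (i : Fin n) : c (φs i) ≤ tupleComplexity φs :=
  Finset.le_sup (f := fun j => c (φs j)) (Finset.mem_univ i)

theorem tupleComplexity_pos (hn : 0 < n) (φs : Fin n → Form n) : 0 < tupleComplexity φs :=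
  (c_pos (φs ⟨0, hn⟩)).trans_le (c_le_tupleComplexity φs _)

theorem one_lt_tupleComplexity_add_one (hn : 0 < n) (φs : Fin n → Form n) :
    1 < tupleComplexity φs + 1 :=
  Nat.succ_lt_succ (tupleComplexity_pos hn φs)

theorem c_upd (φs : Fin n → Form n) (ψ : Form n) :
    c (upd φs ψ) = (tupleComplexity φs + 1) * c ψ :=
  rfl

theorem tupleComplexity_upd (φs χs : Fin n → Form n) :
    tupleComplexity (fun j => upd φs (χs j)) = (tupleComplexity φs + 1) * tupleComplexity χs :=
  (Finset.mul_sup₀ Finset.univ (fun j => c (χs j)) (tupleComplexity φs + 1)).symm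

theorem c_fimpl (φ ψ : Form n) : c (fimpl φ ψ) = max (c φ) (c ψ + 1) + 2 :=
  rfl

theorem tupleComplexity_lt_c_upd (φs : Fin n → Form n) (ψ : Form n) :
    tupleComplexity φs < c (upd φs ψ) :=
  Nat.lt_of_succ_le (Nat.le_mul_of_pos_right _ (c_pos ψ))

theorem c_atom_lt_c_upd_atom (hn : 0 < n) (φs : Fin n → Form n) (p : ℕ) :
    c (atom p : Form n) < c (upd φs (atom p)) :=
  calc c (atom p : Form n) = 1 := rfl
    _ < tupleComplexity φs + 1 := one_lt_tupleComplexity_add_one hn φs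
    _ = c (upd φs (atom p)) := (mul_one _).symm

theorem c_neg_upd_lt_c_upd_neg (hn : 0 < n) (φs : Fin n → Form n) (ψ : Form n) :
    c (neg (upd φs ψ)) < c (upd φs (neg ψ)) :=
  mul_add_lt_mul_add_of_one_lt (one_lt_tupleComplexity_add_one hn φs) one_pos (c ψ)

theorem c_and_upd_lt_c_upd_and (hn : 0 < n) (φs : Fin n → Form n) (ψ ξ : Form n) :
    c (and (upd φs ψ) (upd φs ξ)) < c (upd φs (and ψ ξ)) :=
  calc c (and (upd φs ψ) (upd φs ξ))
    _ = (tupleComplexity φs + 1) * max (c ψ) (c ξ) + 1 :=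
      congrArg (· + 1) (Nat.mul_max_mul_left ..)
    _ < (tupleComplexity φs + 1) * (max (c ψ) (c ξ) + 1) :=
      mul_add_lt_mul_add_of_one_lt (one_lt_tupleComplexity_add_one hn φs) one_pos _
    _ = c (upd φs (and ψ ξ)) := rfl

theorem c_know_upd_lt_c_upd_know (φs : Fin n → Form n) (i : Fin n) (ψ : Form n) :
    c (know i (upd φs ψ)) < c (upd φs (know i ψ)) :=
  mul_add_lt_mul_add_of_one_lt (one_lt_tupleComplexity_add_one i.pos φs) one_pos (c ψ)

theorem c_fimpl_know_fimpl {φ ψ : Form n} (i : Fin n) (h : c φ ≤ c ψ) :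
    c (fimpl φ (know i (fimpl φ ψ))) = c ψ + 7 := by
  simp only [c_fimpl, c]
  omega

theorem c_fimpl_know_fimpl_upd_lt_c_upd_hope (φs : Fin n → Form n) (i : Fin n) (ψ : Form n) :
    c (fimpl (φs i) (know i (fimpl (φs i) (upd φs ψ)))) < c (upd φs (hope i ψ)) := by
  have hφ : c (φs i) ≤ c (upd φs ψ) :=
    (c_le_tupleComplexity φs i).trans (tupleComplexity_lt_c_upd φs ψ).le
  have hm : 1 < tupleComplexity φs + 1 := one_lt_tupleComplexity_add_one i.pos φs
  calc c (fimpl (φs i) (know i (fimpl (φs i) (upd φs ψ))))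
    _ = (tupleComplexity φs + 1) * c ψ + 7 := c_fimpl_know_fimpl i hφ
    _ < (tupleComplexity φs + 1) * c ψ + (tupleComplexity φs + 1) * 4 := by omega
    _ = c (upd φs (hope i ψ)) := (mul_add ..).symm

theorem c_upd_upd_tuple_lt_c_upd_upd (hn : 0 < n) (φs χs : Fin n → Form n) (ψ : Form n) :
    c (upd (fun j => upd φs (χs j)) ψ) < c (upd φs (upd χs ψ)) := by
  rw [c_upd, tupleComplexity_upd, c_upd, c_upd, ← mul_assoc]
  exact Nat.mul_lt_mul_of_pos_right
    (mul_add_lt_mul_add_of_one_lt (one_lt_tupleComplexity_add_one hn φs) one_pos _) (c_pos ψ)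

end Form

/-- for each reduction axiom `θ_l ↔ θ_r` of `KH^pub`, the complexity of the
left-hand side strictly exceeds the complexity of the right-hand side (the right-hand
side of the hope axiom being written with `¬`,`∧` only, via `fimpl a b = ¬(a ∧ ¬b)`). -/
theorem complexity_decreases {n : ℕ} (hn : 0 < n)
    (φs χs : Fin n → Form n) (ψ ξ : Form n) (p : ℕ) (i : Fin n) :
    c (Form.upd φs (.atom p)) > c (Form.atom p : Form n) ∧
    c (Form.upd φs (.neg ψ)) > c (Form.neg (.upd φs ψ)) ∧
    c (Form.upd φs (.and ψ ξ)) > c (Form.and (.upd φs ψ) (.upd φs ξ)) ∧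
    c (Form.upd φs (.know i ψ)) > c (Form.know i (.upd φs ψ)) ∧
    c (Form.upd φs (.hope i ψ)) >
      c (fimpl (φs i) (.know i (fimpl (φs i) (.upd φs ψ)))) ∧
    c (Form.upd φs (.upd χs ψ)) > c (Form.upd (fun j => .upd φs (χs j)) ψ) :=
  ⟨Form.c_atom_lt_c_upd_atom hn φs p,
    Form.c_neg_upd_lt_c_upd_neg hn φs ψ,
    Form.c_and_upd_lt_c_upd_and hn φs ψ ξ,
    Form.c_know_upd_lt_c_upd_know φs i ψ,
    Form.c_fimpl_know_fimpl_upd_lt_c_upd_hope φs i ψ,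
    Form.c_upd_upd_tuple_lt_c_upd_upd hn φs χs ψ⟩
end
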